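/- Let f = p/q be a rational function of two real variables that is unbounded on every punctured neighborhood of (x₀,y₀) (i.e. for every neighborhood U of (x₀,y₀) and every M there is v ∈ U with q(v) ≠ 0 and |f(v)| > M). Then there exists a function Φ of type (i) such that at least one of the following holds: |f(x, y₀+Φ(x−x₀))| → ∞ as x→x₀⁺, or as x→x₀⁻, or |f(x₀+Φ(y−y₀), y)| → ∞ as y→y₀⁺, or as y→y₀⁻ (limits taken through points where q is nonzero). -/

import Mathlib

open MvPolynomial Filter Topology

/-- Evaluation of a two-variable real polynomial at a point of `ℝ²`. -/
noncomputable def pev (p : MvPolynomial (Fin 2) ℝ) (v : ℝ × ℝ) : ℝ :=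
  MvPolynomial.eval ![v.1, v.2] p

/-- `Φ` is a function of type (i). -/
def TypeI (Φ : ℝ → ℝ) : Prop :=
  ∃ (N : ℕ) (φ : Fin N → ℝ) (e : Fin N → ℚ),
    (∀ k, φ k ≠ 0) ∧ StrictMono e ∧ (∀ k, 1 ≤ e k) ∧
    ∀ t : ℝ, Φ t = ∑ k, φ k * |t| ^ ((e k : ℝ))

/-!
Along an ultrafilter with `|p / q| → ∞`, the point `(x, y)`, taken relative to `(x₀, y₀)`, stays in
one of the four sectors cut out by the diagonals, and by symmetry we may suppose `|y| ≤ x`. Write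
`p / q = (d * p') / (d * q')` with `p'`, `q'` coprime, and each of the three polynomials as
`x ^ a * P` with `P(0, y) ≠ 0`. As for Newton–Puiseux expansions, choose `k / m` from the flattest
edge of the Newton polygons of the `P`. If `y` dominates `x ^ (k / m)`, then `p'` and `q'` behave
like monomials, and `q' / p' → 0` on some curve `y = x ^ σ` with `σ` rational. Otherwise
`y / x ^ (k / m)` has a limit `t`, and the substitution `(x, y) ↦ (x ^ m, x ^ k * (t + y))` lowers
the total order of the `P(0, y)` or, when `m = k = 1`, possibly only raises the exponents `a`. The
latter cannot go on forever, because by coprimality `x ^ N = O(p')` for some `N`, which bounds the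
exponent of `p'`. Keeping track of `d` ensures that the curve found does not lie in its zero set.
-/

open scoped Polynomial Polynomial.Bivariate

section Algebra

variable {R : Type*} [CommRing R]

/-- The restriction `P(0, Y)` of a bivariate polynomial to the line `X = 0`. -/
noncomputable def restrictZero : R[X][Y] →+* R[X] :=
  Polynomial.mapRingHom Polynomial.constantCoeff

/-- The order of vanishing of `P(0, Y)` at `Y = 0`. By convention it is `0` when `P(0, Y) = 0`, so
it is used under the hypothesis `restrictZero P ≠ 0`. -/
noncomputable def yOrder (P : R[X][Y]) : ℕ :=
  (restrictZero P).natTrailingDegree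

/-- The Newton polygon of `P` lies on or above the line of slope `-k / m` through the vertex
`(0, yOrder P)` (in coordinates: exponent of `X`, exponent of `Y`). The subtraction is truncated,
so that exponents `j ≥ yOrder P` of `Y` are not constrained. -/
def AboveLine (m k : ℕ) (P : R[X][Y]) : Prop :=
  ∀ j, Polynomial.X ^ (k * (yOrder P - j)) ∣ Polynomial.expand R m (P.coeff j)

/-- The polynomial formed by the coefficients of `P` on the line of `AboveLine m k P`. -/
noncomputable def edgePoly (m k : ℕ) (P : R[X][Y]) : R[X] :=
  ∑ j ∈ P.support with j ≤ yOrder P,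
    Polynomial.monomial j ((Polynomial.expand R m (P.coeff j)).coeff (k * (yOrder P - j)))

/-- The substitution `G(X, Y) ↦ G(X ^ m, X ^ k * (Y + t))`. -/
noncomputable def substHom (m k : ℕ) (t : R) : R[X][Y] →+* R[X][Y] :=
  Polynomial.eval₂RingHom (Polynomial.C.comp (Polynomial.expand R m : R[X] →+* R[X]))
    (Polynomial.C (Polynomial.X ^ k) * (Polynomial.X + Polynomial.C (Polynomial.C t)))

variable {m k : ℕ} {P : R[X][Y]}

theorem restrictZero_C_mul (c : R[X]) (P : R[X][Y]) :
    restrictZero (Polynomial.C c * P) = Polynomial.C (c.coeff 0) * restrictZero P := by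
  simp [restrictZero]

theorem coeff_restrictZero (P : R[X][Y]) (j : ℕ) :
    (restrictZero P).coeff j = (P.coeff j).coeff 0 := by
  simp [restrictZero, Polynomial.constantCoeff_apply]

theorem coeff_zero_coeff_yOrder_ne_zero (hP : restrictZero P ≠ 0) :
    (P.coeff (yOrder P)).coeff 0 ≠ 0 := by
  rw [← coeff_restrictZero]
  exact Polynomial.trailingCoeff_nonzero_iff_nonzero.2 hP

theorem coeff_zero_coeff_of_lt_yOrder {j : ℕ} (hj : j < yOrder P) : (P.coeff j).coeff 0 = 0 := by
  rw [← coeff_restrictZero]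
  exact Polynomial.coeff_eq_zero_of_lt_natTrailingDegree hj

theorem coeff_edgePoly (m k : ℕ) (P : R[X][Y]) (j : ℕ) :
    (edgePoly m k P).coeff j = if j ≤ yOrder P then
      (Polynomial.expand R m (P.coeff j)).coeff (k * (yOrder P - j)) else 0 := by
  simp only [edgePoly, Polynomial.finsetSum_coeff, Polynomial.coeff_monomial,
    Finset.sum_ite_eq', Finset.mem_filter, Polynomial.mem_support_iff]
  by_cases hj : P.coeff j = 0 <;> simp [hj]

theorem coeff_yOrder_edgePoly (hm : 0 < m) (k : ℕ) (P : R[X][Y]) :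
    (edgePoly m k P).coeff (yOrder P) = (P.coeff (yOrder P)).coeff 0 := by
  simp [coeff_edgePoly, Polynomial.coeff_expand hm]

theorem edgePoly_ne_zero (hm : 0 < m) (k : ℕ) (hP : restrictZero P ≠ 0) :
    edgePoly m k P ≠ 0 := by
  intro h
  apply coeff_zero_coeff_yOrder_ne_zero hP
  rw [← coeff_yOrder_edgePoly hm k, h, Polynomial.coeff_zero]

theorem natDegree_edgePoly (hm : 0 < m) (k : ℕ) (hP : restrictZero P ≠ 0) :
    (edgePoly m k P).natDegree = yOrder P := by
  apply Polynomial.natDegree_eq_of_le_of_coeff_ne_zero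
  · refine Polynomial.natDegree_le_iff_coeff_eq_zero.2 fun j hj => ?_
    rw [coeff_edgePoly, if_neg (not_le.2 hj)]
  · rw [coeff_yOrder_edgePoly hm]
    exact coeff_zero_coeff_yOrder_ne_zero hP

theorem substHom_eq_sum (m k : ℕ) (t : R) (P : R[X][Y]) :
    substHom m k t P = ∑ j ∈ P.support,
      Polynomial.C (Polynomial.expand R m (P.coeff j) * Polynomial.X ^ (k * j)) *
        (Polynomial.X + Polynomial.C (Polynomial.C t)) ^ j := by
  simp only [substHom, Polynomial.coe_eval₂RingHom, Polynomial.eval₂_eq_sum, Polynomial.sum_def,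
    RingHom.comp_apply, RingHom.coe_coe, mul_pow, ← Polynomial.C_pow,
    ← pow_mul, Polynomial.C_mul, mul_assoc]

theorem evalEval_eq_sum (P : R[X][Y]) (x y : R) :
    P.evalEval x y = ∑ j ∈ P.support, (P.coeff j).eval x * y ^ j := by
  rw [Polynomial.evalEval, Polynomial.eval_eq_sum (x := Polynomial.C y), Polynomial.sum_def,
    Polynomial.eval_finsetSum]
  simp only [Polynomial.eval_mul, Polynomial.eval_pow, Polynomial.eval_C]

theorem evalEval_substHom (m k : ℕ) (t x z : R) (P : R[X][Y]) :
    (substHom m k t P).evalEval x z = P.evalEval (x ^ m) (x ^ k * (t + z)) := by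
  rw [substHom_eq_sum, Polynomial.evalEval_finsetSum, evalEval_eq_sum]
  refine Finset.sum_congr rfl fun j _ => ?_
  simp [Polynomial.evalEval_C, Polynomial.expand_eval, mul_pow, pow_mul]
  ring

theorem AboveLine.exists_substHom_eq (h : AboveLine m k P) (hk : 0 < k) (t : R) :
    ∃ P', substHom m k t P = Polynomial.C (Polynomial.X ^ (k * yOrder P)) * P' ∧
      restrictZero P' = (edgePoly m k P).comp (Polynomial.X + Polynomial.C t) := by
  choose d hd using h
  refine ⟨∑ j ∈ P.support, Polynomial.C (d j * Polynomial.X ^ (k * (j - yOrder P))) *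
    (Polynomial.X + Polynomial.C (Polynomial.C t)) ^ j, ?_, ?_⟩
  · rw [substHom_eq_sum, Finset.mul_sum]
    refine Finset.sum_congr rfl fun j _ => ?_
    have hexp : k * (yOrder P - j) + k * j = k * yOrder P + k * (j - yOrder P) := by
      rw [← mul_add, ← mul_add]
      congr 1
      omega
    rw [← mul_assoc, ← Polynomial.C_mul, hd, mul_right_comm, ← pow_add, hexp, pow_add]
    ring_nf
  · have hcoeff (j : ℕ) :
        (Polynomial.expand R m (P.coeff j)).coeff (k * (yOrder P - j)) = (d j).coeff 0 := by
      rw [hd, Polynomial.coeff_X_pow_mul', if_pos le_rfl, Nat.sub_self]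
    rw [edgePoly, Finset.sum_filter, map_sum, Polynomial.comp, Polynomial.eval₂_finsetSum]
    refine Finset.sum_congr rfl fun j _ => ?_
    rw [hcoeff, restrictZero_C_mul]
    split_ifs with hj
    · simp [restrictZero, Nat.sub_eq_zero_of_le hj]
    · simp [Polynomial.coeff_X_pow, hk.ne', Nat.sub_eq_zero_iff_le, hj]

theorem yOrder_eq_rootMultiplicity {P' : R[X][Y]} {E : R[X]} {t : R}
    (h : restrictZero P' = E.comp (Polynomial.X + Polynomial.C t)) :
    yOrder P' = E.rootMultiplicity t := by
  rw [yOrder, h, Polynomial.rootMultiplicity_eq_natTrailingDegree]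

theorem aboveLine_of_mul_le (hm : 0 < m) (h : ∀ j < yOrder P, P.coeff j ≠ 0 →
    k * (yOrder P - j) ≤ m * (P.coeff j).natTrailingDegree) : AboveLine m k P := by
  intro j
  rw [Polynomial.X_pow_dvd_iff]
  intro d hd
  rw [Polynomial.coeff_expand hm]
  split_ifs with hmd
  · obtain ⟨e, rfl⟩ := hmd
    rw [Nat.mul_div_cancel_left e hm]
    by_contra hne
    have hj : j < yOrder P := by
      by_contra! hj
      simp [Nat.sub_eq_zero_of_le hj] at hd
    have hc : P.coeff j ≠ 0 := by
      rintro hc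
      simp [hc] at hne
    have he : (P.coeff j).natTrailingDegree ≤ e := Polynomial.natTrailingDegree_le_of_ne_zero hne
    exact (hd.trans_le (h j hj hc)).not_ge (Nat.mul_le_mul_left m he)
  · rfl

theorem natTrailingDegree_coeff_pos {j : ℕ} (hj : j < yOrder P) (hc : P.coeff j ≠ 0) :
    0 < (P.coeff j).natTrailingDegree :=
  Nat.pos_of_ne_zero fun h => (Polynomial.natTrailingDegree_eq_zero.1 h).elim hc
    fun h0 => h0 (coeff_zero_coeff_of_lt_yOrder hj)

/-- The line is that of the flattest edge met by the Newton polygons, slopes beyond `-1` being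
replaced by `-1`. -/
theorem exists_aboveLine {κ : Type*} [Finite κ] (P : κ → R[X][Y]) :
    (∀ i, AboveLine 1 1 (P i)) ∨ ∃ m k, 0 < k ∧ k < m ∧ (∀ i, AboveLine m k (P i)) ∧
      ∃ i, ∃ j < yOrder (P i), (edgePoly m k (P i)).coeff j ≠ 0 := by
  classical
  cases nonempty_fintype κ
  let S : Finset ((_ : κ) × ℕ) :=
    Finset.univ.sigma fun i => {j ∈ Finset.range (yOrder (P i)) | (P i).coeff j ≠ 0}
  have mem_S (i j) : ⟨i, j⟩ ∈ S ↔ j < yOrder (P i) ∧ (P i).coeff j ≠ 0 := by simp [S]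
  let v (i j) : ℕ := ((P i).coeff j).natTrailingDegree
  by_cases hsteep : ∀ x ∈ S, yOrder (P x.1) - x.2 ≤ v x.1 x.2
  · refine Or.inl fun i => aboveLine_of_mul_le one_pos fun j hj hc => ?_
    simpa using hsteep ⟨i, j⟩ ((mem_S i j).2 ⟨hj, hc⟩)
  push Not at hsteep
  obtain ⟨⟨i₁, j₁⟩, h₁, hlt₁⟩ := hsteep
  obtain ⟨⟨i, j⟩, h, hmin⟩ :=
    S.exists_min_image (fun x => (v x.1 x.2 : ℚ) / (yOrder (P x.1) - x.2 : ℕ)) ⟨_, h₁⟩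
  have hle (i' j') (h' : ⟨i', j'⟩ ∈ S) :
      v i j * (yOrder (P i') - j') ≤ (yOrder (P i) - j) * v i' j' := by
    have hpos (i j) (h : ⟨i, j⟩ ∈ S) : (0 : ℚ) < (yOrder (P i) - j : ℕ) :=
      Nat.cast_pos.2 (Nat.sub_pos_of_lt ((mem_S i j).1 h).1)
    have := hmin _ h'
    rw [div_le_div_iff₀ (hpos i j h) (hpos i' j' h'), mul_comm (v i' j' : ℚ)] at this
    exact_mod_cast this
  obtain ⟨hj, hc⟩ := (mem_S i j).1 h
  have hm : 0 < yOrder (P i) - j := Nat.sub_pos_of_lt hj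
  refine Or.inr ⟨yOrder (P i) - j, v i j, natTrailingDegree_coeff_pos hj hc, ?_, fun i' =>
    aboveLine_of_mul_le hm fun j' hj' hc' => hle i' j' ((mem_S i' j').2 ⟨hj', hc'⟩), i, j, hj, ?_⟩
  · by_contra! hge
    exact (Nat.mul_lt_mul_of_le_of_lt hge hlt₁ (hm.trans_le hge)).not_ge (hle i₁ j₁ h₁)
  · rw [coeff_edgePoly, if_pos hj.le, Polynomial.coeff_expand_mul hm]
    exact Polynomial.trailingCoeff_nonzero_iff_nonzero.2 hc

theorem exists_eq_C_X_pow_mul (hP : P ≠ 0) :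
    ∃ (a : ℕ) (P' : R[X][Y]), restrictZero P' ≠ 0 ∧
      P = Polynomial.C (Polynomial.X ^ a) * P' := by
  have hdvd (n : ℕ) (Q : R[X][Y]) :
      (Polynomial.C Polynomial.X) ^ n ∣ Q ↔ ∀ j, Polynomial.X ^ n ∣ Q.coeff j := by
    rw [← Polynomial.C_pow, Polynomial.C_dvd_iff_dvd_coeff]
  have hfin : FiniteMultiplicity (Polynomial.C Polynomial.X) P := by
    obtain ⟨j, hj⟩ := Polynomial.support_nonempty.2 hP
    refine ⟨(P.coeff j).natTrailingDegree, fun h => ?_⟩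
    have hcoeff := Polynomial.X_pow_dvd_iff.1 ((hdvd _ P).1 h j) _ (Nat.lt_succ_self _)
    exact Polynomial.trailingCoeff_nonzero_iff_nonzero.2
      (Polynomial.mem_support_iff.1 hj) hcoeff
  obtain ⟨P', hPP', hndvd⟩ := hfin.exists_eq_pow_mul_and_not_dvd
  refine ⟨_, P', fun h0 => hndvd ?_, hPP'.trans (by rw [Polynomial.C_pow])⟩
  rw [← pow_one (Polynomial.C Polynomial.X), hdvd]
  intro j
  rw [pow_one, Polynomial.X_dvd_iff, ← coeff_restrictZero, h0, Polynomial.coeff_zero]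

section IsDomain

variable [IsDomain R] {t : R}

theorem coeff_natDegree_sub_one_ne_zero_of_rootMultiplicity_eq [CharZero R] {E : R[X]} {j : ℕ}
    (hE : E.rootMultiplicity t = E.natDegree) (hj : j < E.natDegree) (hEj : E.coeff j ≠ 0) :
    E.coeff (E.natDegree - 1) ≠ 0 := by
  obtain ⟨q, hq⟩ := Polynomial.pow_rootMultiplicity_dvd E t
  have hE0 : E ≠ 0 := by
    rintro rfl
    simp at hEj
  have hq0 : q ≠ 0 := right_ne_zero_of_mul (hq ▸ hE0)
  have hqdeg : q.natDegree = 0 := by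
    have := congrArg Polynomial.natDegree hq
    rw [Polynomial.natDegree_mul (pow_ne_zero _ (Polynomial.X_sub_C_ne_zero t)) hq0,
      Polynomial.natDegree_pow, Polynomial.natDegree_X_sub_C, hE] at this
    omega
  obtain ⟨c, rfl⟩ := Polynomial.natDegree_eq_zero.1 hqdeg
  have hcoeff (i : ℕ) :
      E.coeff i = (-t) ^ (E.natDegree - i) * (E.natDegree.choose i : R) * c := by
    conv_lhs => rw [hq]
    rw [Polynomial.coeff_mul_C, hE, sub_eq_add_neg, ← Polynomial.C_neg,
      Polynomial.coeff_X_add_C_pow]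
  have ht : -t ≠ 0 := by
    intro ht
    rw [hcoeff, ht, zero_pow (Nat.sub_pos_of_lt hj).ne', zero_mul, zero_mul] at hEj
    exact hEj rfl
  rw [hcoeff]
  exact mul_ne_zero (mul_ne_zero (pow_ne_zero _ ht)
    (Nat.cast_ne_zero.2 (Nat.choose_pos (Nat.sub_le _ _)).ne')) (Polynomial.C_ne_zero.1 hq0)

theorem rootMultiplicity_edgePoly_le (hm : 0 < m) (k : ℕ) (hP : restrictZero P ≠ 0) (t : R) :
    (edgePoly m k P).rootMultiplicity t ≤ yOrder P := by
  classical
  rw [← natDegree_edgePoly hm k hP, ← Polynomial.count_roots]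
  exact (Multiset.count_le_card _ _).trans (Polynomial.card_roots' _)

/-- If equality held, the edge polynomial would be `c * (Y - t) ^ yOrder P` with `t ≠ 0`, hence have
a term of degree `yOrder P - 1`; this term comes from an exponent of `X` equal to `k / m`. -/
theorem rootMultiplicity_edgePoly_lt [CharZero R] (hk : 0 < k) (hkm : k < m)
    (hP : restrictZero P ≠ 0) {j : ℕ} (hj : j < yOrder P) (hEj : (edgePoly m k P).coeff j ≠ 0)
    (t : R) : (edgePoly m k P).rootMultiplicity t < yOrder P := by
  have hm : 0 < m := hk.trans hkm
  refine (rootMultiplicity_edgePoly_le hm k hP t).lt_of_ne fun heq => ?_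
  rw [← natDegree_edgePoly hm k hP] at heq hj
  have hne := coeff_natDegree_sub_one_ne_zero_of_rootMultiplicity_eq heq hj hEj
  rw [natDegree_edgePoly hm k hP] at hne hj
  have hndvd : ¬ m ∣ k * (yOrder P - (yOrder P - 1)) := by
    rw [Nat.sub_sub_self (by omega : 1 ≤ yOrder P), mul_one]
    exact Nat.not_dvd_of_pos_of_lt hk hkm
  rw [coeff_edgePoly, if_pos (Nat.sub_le _ _), Polynomial.coeff_expand hm, if_neg hndvd] at hne
  exact hne rfl

end IsDomain

end Algebra

section Bezout

variable {R : Type*} [CommRing R] [IsDomain R] (K : Type*) [Field K] [Algebra R K]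
  [IsFractionRing R K]

open scoped nonZeroDivisors in
theorem exists_map_eq_C_mul (p : K[X]) : ∃ (c : R) (P : R[X]), c ≠ 0 ∧
    P.map (algebraMap R K) = Polynomial.C (algebraMap R K c) * p := by
  obtain ⟨c, hc, hcp⟩ := IsLocalization.integerNormalization_spec R⁰ p
  refine ⟨c, IsLocalization.integerNormalization R⁰ p, nonZeroDivisors.ne_zero hc, ?_⟩
  rw [hcp, Algebra.smul_def, Polynomial.algebraMap_apply]

variable [UniqueFactorizationMonoid R]

theorem exists_isPrimitive_associated_map {p : K[X]} (hp : p ≠ 0) :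
    ∃ P : R[X], P.IsPrimitive ∧ Associated (P.map (algebraMap R K)) p := by
  let _ : NormalizedGCDMonoid R := Nonempty.some inferInstance
  have isUnit_C {c : R} (hc : c ≠ 0) : IsUnit (Polynomial.C (algebraMap R K c)) :=
    Polynomial.isUnit_C.2 (isUnit_iff_ne_zero.2
      ((map_ne_zero_iff _ (IsFractionRing.injective R K)).2 hc))
  obtain ⟨c, P, hc, hP⟩ := exists_map_eq_C_mul (R := R) K p
  have hP0 : P ≠ 0 := by
    rintro rfl
    rw [Polynomial.map_zero] at hP
    exact mul_ne_zero (isUnit_C hc).ne_zero hp hP.symm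
  refine ⟨P.primPart, P.isPrimitive_primPart, ?_⟩
  rw [P.eq_C_content_mul_primPart, Polynomial.map_mul, Polynomial.map_C] at hP
  rw [← associated_isUnit_mul_left_iff (isUnit_C (Polynomial.content_eq_zero_iff.not.2 hP0)),
    ← associated_isUnit_mul_right_iff (isUnit_C hc)]
  exact Associated.of_eq hP

theorem isCoprime_map_of_isRelPrime {f g : R[X]} (h : IsRelPrime f g) :
    IsCoprime (f.map (algebraMap R K)) (g.map (algebraMap R K)) := by
  rw [← isRelPrime_iff_isCoprime]
  intro d hdf hdg
  have hd : d ≠ 0 := by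
    rintro rfl
    rw [zero_dvd_iff, Polynomial.map_eq_zero_iff (IsFractionRing.injective R K)] at hdf hdg
    subst hdf hdg
    exact not_isUnit_zero (h dvd_rfl dvd_rfl)
  obtain ⟨P, hprim, hPd⟩ := exists_isPrimitive_associated_map (R := R) K hd
  have hP : IsUnit P := h (hprim.dvd_of_fraction_map_dvd_fraction_map (hPd.dvd.trans hdf))
    (hprim.dvd_of_fraction_map_dvd_fraction_map (hPd.dvd.trans hdg))
  exact hPd.isUnit (hP.map (Polynomial.mapRingHom (algebraMap R K)))

theorem exists_mul_add_mul_eq_C_of_isRelPrime {f g : R[X]} (h : IsRelPrime f g) :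
    ∃ (r : R) (A B : R[X]), r ≠ 0 ∧ f * A + g * B = Polynomial.C r := by
  let K := FractionRing R
  obtain ⟨a, b, hab⟩ := isCoprime_map_of_isRelPrime K h
  obtain ⟨c, A, hc, hA⟩ := exists_map_eq_C_mul (R := R) K a
  obtain ⟨d, B, hd, hB⟩ := exists_map_eq_C_mul (R := R) K b
  refine ⟨c * d, A * Polynomial.C d, B * Polynomial.C c, mul_ne_zero hc hd, ?_⟩
  apply Polynomial.map_injective (algebraMap R K) (IsFractionRing.injective R K)
  simp only [Polynomial.map_add, Polynomial.map_mul, Polynomial.map_C, hA, hB, map_mul]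
  linear_combination
    Polynomial.C (algebraMap R K c) * Polynomial.C (algebraMap R K d) * hab

end Bezout

section Asymptotics

open Asymptotics

variable {ι : Type*} {l : Filter ι}

theorem tendsto_abs_div_atTop_iff {f g : ι → ℝ} :
    Tendsto (fun n => |f n / g n|) l atTop ↔ (∀ᶠ n in l, g n ≠ 0) ∧ g =o[l] f := by
  have habs (n : ι) : |g n / f n| = |f n / g n|⁻¹ := by rw [← abs_inv, inv_div]
  constructor
  · intro h
    have hne : ∀ᶠ n in l, f n / g n ≠ 0 := (h.eventually_gt_atTop 0).mono fun n => abs_pos.1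
    refine ⟨hne.mono fun n hn hg => hn (by rw [hg, div_zero]), ?_⟩
    rw [isLittleO_iff_tendsto' (hne.mono fun n hn hf => absurd (by rw [hf, zero_div]) hn),
      tendsto_zero_iff_abs_tendsto_zero]
    exact (tendsto_inv_atTop_zero.comp h).congr fun n => (habs n).symm
  · rintro ⟨hg, h⟩
    have hf : ∀ᶠ n in l, f n ≠ 0 := (h.isBigO.eq_zero_imp.and hg).mono fun n hn => mt hn.1 hn.2
    have hlim : Tendsto (fun n => |g n / f n|) l (𝓝[>] 0) :=
      tendsto_nhdsWithin_iff.2 ⟨(tendsto_zero_iff_abs_tendsto_zero _).1 h.tendsto_div_nhds_zero,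
        (hf.and hg).mono fun n hn => abs_pos.2 (div_ne_zero hn.2 hn.1)⟩
    exact hlim.inv_tendsto_nhdsGT_zero.congr fun n => by rw [Pi.inv_apply, habs, inv_inv]

theorem exists_tendsto_nhds_or_tendsto_abs_atTop (U : Ultrafilter ι) (w : ι → ℝ) :
    (∃ t, Tendsto w U (𝓝 t)) ∨ Tendsto (fun n => |w n|) U atTop := by
  by_cases h : ∃ M : ℝ, ∀ᶠ n in (U : Filter ι), |w n| ≤ M
  · obtain ⟨M, hM⟩ := h
    have hU : ↑(U.map w) ≤ 𝓟 (Set.Icc (-M) M) := le_principal_iff.2 (hM.mono fun n => abs_le.1)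
    obtain ⟨t, -, ht⟩ := isCompact_Icc.ultrafilter_le_nhds (U.map w) hU
    exact Or.inl ⟨t, ht⟩
  · push Not at h
    exact Or.inr (tendsto_atTop.2 fun M => (h M).mono fun n => le_of_lt)

theorem isTheta_eval_one {c : ℝ[X]} (hc : c.coeff 0 ≠ 0) {x : ι → ℝ} (hx : Tendsto x l (𝓝 0)) :
    (fun n => c.eval (x n)) =Θ[l] fun _ => (1 : ℝ) := by
  rw [Polynomial.coeff_zero_eq_eval_zero] at hc
  exact ((isEquivalent_const_iff_tendsto hc).2 ((c.continuous.tendsto 0).comp hx)).isTheta.trans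
    (isTheta_const_const hc one_ne_zero)

theorem exists_pow_isBigO_eval {c : ℝ[X]} (hc : c ≠ 0) {x : ι → ℝ} (hx : Tendsto x l (𝓝 0)) :
    ∃ N : ℕ, (fun n => x n ^ N) =O[l] fun n => c.eval (x n) := by
  obtain ⟨N, d, hd, rfl⟩ := WfDvdMonoid.max_power_factor hc Polynomial.irreducible_X
  rw [Polynomial.X_dvd_iff] at hd
  refine ⟨N, ?_⟩
  simpa using (isBigO_refl (fun n => x n ^ N) l).mul (isTheta_eval_one hd hx).isBigO_symm

variable {m k : ℕ} {P : ℝ[X][Y]} {u y : ι → ℝ}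

theorem AboveLine.isBigO_eval_coeff (h : AboveLine m k P) (hu : Tendsto u l (𝓝 0)) (j : ℕ) :
    (fun n => (P.coeff j).eval (u n ^ m)) =O[l] fun n => (u n ^ k) ^ (yOrder P - j) := by
  obtain ⟨d, hd⟩ := h j
  have hd1 : (fun n => d.eval (u n)) =O[l] fun _ => (1 : ℝ) :=
    ((d.continuous.tendsto 0).comp hu).isBigO_one ℝ
  refine ((isBigO_refl (fun n => (u n ^ k) ^ (yOrder P - j)) l).mul hd1).congr (fun n => ?_)
    fun n => mul_one _
  rw [← Polynomial.expand_eval, hd]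
  simp [pow_mul]

/-- Where `y` dominates `u ^ k`, the vertex `(0, yOrder P)` of the Newton polygon dominates. -/
theorem AboveLine.isTheta_evalEval (h : AboveLine m k P) (hm : 0 < m) (hP : restrictZero P ≠ 0)
    (hu : Tendsto u l (𝓝 0)) (hy : Tendsto y l (𝓝 0)) (huy : (fun n => u n ^ k) =o[l] y) :
    (fun n => P.evalEval (u n ^ m) (y n)) =Θ[l] fun n => y n ^ yOrder P := by
  have hb := coeff_zero_coeff_yOrder_ne_zero hP
  have hvertex : (fun n => (P.coeff (yOrder P)).eval (u n ^ m) * y n ^ yOrder P) =Θ[l]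
      fun n => y n ^ yOrder P := by
    have hum : Tendsto (fun n => u n ^ m) l (𝓝 0) := by simpa [hm.ne'] using hu.pow m
    simpa using (isTheta_eval_one hb hum).mul (isTheta_refl (fun n => y n ^ yOrder P) l)
  have hrest (j : ℕ) (hj : j ≠ yOrder P) :
      (fun n => (P.coeff j).eval (u n ^ m) * y n ^ j) =o[l] fun n => y n ^ yOrder P := by
    refine ((h.isBigO_eval_coeff hu j).mul (isBigO_refl (fun n => y n ^ j) l)).trans_isLittleO ?_
    rcases hj.lt_or_gt with hlt | hgt
    · refine ((huy.pow (Nat.sub_pos_of_lt hlt)).mul_isBigO (isBigO_refl (fun n => y n ^ j) l)).congr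
        (fun n => rfl) fun n => ?_
      rw [← pow_add, Nat.sub_add_cancel hlt.le]
    · simpa [Nat.sub_eq_zero_of_le hgt.le, Function.comp_def] using
        (isLittleO_pow_pow hgt).comp_tendsto hy
  have hmem : yOrder P ∈ P.support :=
    Polynomial.mem_support_iff.2 fun h0 => hb (by rw [h0, Polynomial.coeff_zero])
  simp only [evalEval_eq_sum, ← Finset.add_sum_erase _ _ hmem]
  exact hvertex.add_isLittleO
    (IsLittleO.fun_sum fun j hj => hrest j (Finset.ne_of_mem_erase hj))

end Asymptotics

section Curves

open Asymptotics

/-- The value at `s` of the finite Puiseux sum `∑ e, F e * s ^ e`. -/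
noncomputable def puiseuxEval (F : ℚ →₀ ℝ) (s : ℝ) : ℝ :=
  F.sum fun e c => c * s ^ (e : ℝ)

/-- The Puiseux sum `s ^ (k / m) * (t + F (s ^ (1 / m)))`, which describes in the coordinates of `G`
the curve that `F` describes in the coordinates of `substHom m k t G`. -/
noncomputable def substCurve (m k : ℕ) (t : ℝ) (F : ℚ →₀ ℝ) : ℚ →₀ ℝ :=
  Finsupp.single (k / m : ℚ) t + F.mapDomain fun e : ℚ => (k + e) / m

/-- Some curve `y = ∑ e, F e * x ^ e` with `x → 0⁺` and all exponents in `S` eventually avoids the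
zeros of all the `G i`, and `G q` is negligible compared with `G p` on it. -/
def HasCurve {κ : Type*} (S : Set ℚ) (G : κ → ℝ[X][Y]) (p q : κ) : Prop :=
  ∃ F : ℚ →₀ ℝ, (∀ e ∈ F.support, e ∈ S) ∧
    (∀ i, ∀ᶠ s in 𝓝[>] 0, (G i).evalEval s (puiseuxEval F s) ≠ 0) ∧
    (fun s => (G q).evalEval s (puiseuxEval F s)) =o[𝓝[>] 0]
      fun s => (G p).evalEval s (puiseuxEval F s)

theorem puiseuxEval_single (e : ℚ) (c s : ℝ) :
    puiseuxEval (Finsupp.single e c) s = c * s ^ (e : ℝ) :=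
  Finsupp.sum_single_index (zero_mul _)

theorem puiseuxEval_substCurve {m : ℕ} (hm : 0 < m) (k : ℕ) (t : ℝ) (F : ℚ →₀ ℝ) {u : ℝ}
    (hu : 0 < u) : puiseuxEval (substCurve m k t F) (u ^ m) = u ^ k * (t + puiseuxEval F u) := by
  have hpow (e : ℚ) : (u ^ m) ^ (((k + e) / m : ℚ) : ℝ) = u ^ k * u ^ (e : ℝ) := by
    rw [← Real.rpow_natCast, ← Real.rpow_mul hu.le, ← Real.rpow_natCast u k, ← Real.rpow_add hu]
    congr 1
    push_cast
    field_simp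
  rw [puiseuxEval, substCurve, Finsupp.sum_add_index' (by simp) (by simp [add_mul]),
    Finsupp.sum_single_index (zero_mul _),
    Finsupp.sum_mapDomain_index (by simp) (by simp [add_mul]), mul_add, mul_comm _ t]
  congr 1
  · simpa using congrArg (t * ·) (hpow 0)
  · rw [puiseuxEval, Finsupp.mul_sum]
    refine Finsupp.sum_congr fun e _ => ?_
    rw [hpow, mul_left_comm]

theorem le_of_mem_support_substCurve {m k : ℕ} {t : ℝ} {F : ℚ →₀ ℝ} (hF : ∀ e ∈ F.support, 0 ≤ e)
    {e : ℚ} (he : e ∈ (substCurve m k t F).support) : (k / m : ℚ) ≤ e := by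
  classical
  rcases Finset.mem_union.1 (Finsupp.support_add he) with h | h
  · rw [Finset.mem_singleton.1 (Finsupp.support_single_subset h)]
  · obtain ⟨e', he', rfl⟩ := Finset.mem_image.1 (Finsupp.mapDomain_support h)
    gcongr
    exact le_add_of_nonneg_right (hF e' he')

theorem tendsto_rpow_nhdsGT_zero {r : ℝ} (hr : 0 < r) :
    Tendsto (fun s : ℝ => s ^ r) (𝓝[>] 0) (𝓝[>] 0) := by
  refine tendsto_nhdsWithin_iff.2 ⟨?_, ?_⟩
  · simpa [Real.zero_rpow hr.ne'] using
      ((Real.continuous_rpow_const hr.le).tendsto 0).mono_left nhdsWithin_le_nhds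
  · filter_upwards [self_mem_nhdsWithin] with s hs using Real.rpow_pos_of_pos hs r

variable {κ : Type*} {G : κ → ℝ[X][Y]} {p q : κ}

theorem HasCurve.mono {S T : Set ℚ} (h : HasCurve S G p q) (hST : S ⊆ T) :
    HasCurve T G p q :=
  h.imp fun _ hF => ⟨fun e he => hST (hF.1 e he), hF.2⟩

theorem HasCurve.of_substHom {m k : ℕ} (hm : 0 < m) {t : ℝ}
    (h : HasCurve (Set.Ioi 0) (fun i => substHom m k t (G i)) p q) :
    HasCurve (Set.Ici (k / m : ℚ)) G p q := by
  obtain ⟨F, hF, hne, ho⟩ := h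
  let root (s : ℝ) : ℝ := s ^ (m : ℝ)⁻¹
  have hroot : Tendsto root (𝓝[>] 0) (𝓝[>] 0) := tendsto_rpow_nhdsGT_zero (by positivity)
  have heval : ∀ᶠ s in 𝓝[>] 0, ∀ i,
      (substHom m k t (G i)).evalEval (root s) (puiseuxEval F (root s)) =
        (G i).evalEval s (puiseuxEval (substCurve m k t F) s) := by
    filter_upwards [self_mem_nhdsWithin] with s (hs : 0 < s) i
    have hpow : root s ^ m = s := Real.rpow_inv_natCast_pow hs.le hm.ne'
    rw [evalEval_substHom, ← puiseuxEval_substCurve hm k t F (Real.rpow_pos_of_pos hs _), hpow]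
  refine ⟨substCurve m k t F, fun e => le_of_mem_support_substCurve fun e he => (hF e he).le,
    fun i => ?_, ?_⟩
  · filter_upwards [hroot.eventually (hne i), heval] with s hs he
    rwa [← he i]
  · exact (ho.comp_tendsto hroot).congr' (heval.mono fun s hs => hs q) (heval.mono fun s hs => hs p)

end Curves

section Approach

open Asymptotics

theorem exists_rat_exponent {x y : ℝ} (hx0 : 0 < x) (hx1 : x < 1) (hy : y < 1) {ρ : ℝ}
    (hρ : x ^ ρ < y) {a b a' b' : ℕ} (h : x ^ a' * y ^ b' < x ^ a * y ^ b) :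
    ∃ σ : ℚ, 0 < σ ∧ (σ : ℝ) < ρ ∧ a + σ * b < a' + σ * b' := by
  have hy0 : 0 < y := (Real.rpow_pos_of_pos hx0 ρ).trans hρ
  obtain ⟨τ, rfl⟩ : ∃ τ : ℝ, x ^ τ = y := ⟨Real.logb x y, Real.rpow_logb hx0 hx1.ne hy0⟩
  have hmono (r s : ℝ) : x ^ r < x ^ s ↔ s < r :=
    Real.rpow_lt_rpow_left_iff_of_base_lt_one hx0 hx1
  have hmonomial (a b : ℕ) : x ^ a * (x ^ τ) ^ b = x ^ (a + τ * b : ℝ) := by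
    rw [Real.rpow_add hx0, Real.rpow_mul hx0.le, Real.rpow_natCast, Real.rpow_natCast]
  rw [hmonomial, hmonomial, hmono] at h
  rw [hmono] at hρ
  rw [← Real.rpow_zero x, hmono] at hy
  have hopen : IsOpen {σ : ℝ | 0 < σ ∧ σ < ρ ∧ a + σ * b < a' + σ * b'} :=
    (isOpen_lt (by fun_prop) (by fun_prop)).and
      ((isOpen_lt (by fun_prop) (by fun_prop)).and (isOpen_lt (by fun_prop) (by fun_prop)))
  obtain ⟨σ, hσ0, hσρ, hσ⟩ := Rat.denseRange_cast.exists_mem_open hopen ⟨τ, hy, hρ, h⟩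
  exact ⟨σ, Rat.cast_pos.1 hσ0, hσρ, by exact_mod_cast hσ⟩

theorem isLittleO_rpow_nhdsGT_zero {r s : ℝ} (h : r < s) :
    (fun x : ℝ => x ^ s) =o[𝓝[>] 0] fun x => x ^ r := by
  have hdiff : (fun x : ℝ => x ^ (s - r)) =o[𝓝[>] 0] fun _ => (1 : ℝ) :=
    (isLittleO_one_iff ℝ).2
      ((tendsto_rpow_nhdsGT_zero (sub_pos.2 h)).mono_right nhdsWithin_le_nhds)
  refine ((isBigO_refl (fun x : ℝ => x ^ r) _).mul_isLittleO hdiff).congr' ?_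
    (Eventually.of_forall fun x => mul_one _)
  filter_upwards [self_mem_nhdsWithin] with x (hx : 0 < x)
  rw [← Real.rpow_add hx, add_sub_cancel]

variable {ι : Type*} {l : Filter ι} {x y : ι → ℝ} {m k : ℕ} {Q : ℝ[X][Y]}

theorem eventually_root_pow_eq (hm : 0 < m) (hx : Tendsto x l (𝓝[>] 0)) :
    ∀ᶠ n in l, (x n ^ (m : ℝ)⁻¹) ^ m = x n :=
  (hx.eventually self_mem_nhdsWithin).mono fun _ hn =>
    Real.rpow_inv_natCast_pow (le_of_lt hn) hm.ne'

theorem AboveLine.isTheta_evalEval_C_X_pow_mul (h : AboveLine m k Q) (hm : 0 < m)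
    (hQ : restrictZero Q ≠ 0) (a : ℕ) (hx : Tendsto x l (𝓝[>] 0)) (hy : Tendsto y l (𝓝 0))
    (hxy : (fun n => (x n ^ (m : ℝ)⁻¹) ^ k) =o[l] y) :
    (fun n => (Polynomial.C (Polynomial.X ^ a) * Q).evalEval (x n) (y n)) =Θ[l]
      fun n => x n ^ a * y n ^ yOrder Q := by
  have hroot : Tendsto (fun n => x n ^ (m : ℝ)⁻¹) l (𝓝 0) :=
    ((tendsto_rpow_nhdsGT_zero (by positivity)).comp hx).mono_right nhdsWithin_le_nhds
  have hQy : (fun n => Q.evalEval (x n) (y n)) =Θ[l] fun n => y n ^ yOrder Q :=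
    EventuallyEq.trans_isTheta
      ((eventually_root_pow_eq hm hx).mono fun n hn =>
        congrArg (fun z => Q.evalEval z (y n)) hn.symm)
      (h.isTheta_evalEval hm hQ hroot hy hxy)
  simpa [Polynomial.evalEval_C] using (isTheta_refl (fun n => x n ^ a) l).mul hQy

theorem tendsto_evalEval_zero (Q : ℝ[X][Y]) (hx : Tendsto x l (𝓝 0)) (hy : Tendsto y l (𝓝 0)) :
    Tendsto (fun n => Q.evalEval (x n) (y n)) l (𝓝 ((Q.coeff 0).coeff 0)) := by
  have hcont : Continuous fun v : ℝ × ℝ => Q.evalEval v.1 v.2 := by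
    simp only [evalEval_eq_sum]
    fun_prop
  have hzero : (Q.coeff 0).coeff 0 = Q.evalEval 0 0 := by
    rw [Polynomial.evalEval, Polynomial.C_0, ← Polynomial.coeff_zero_eq_eval_zero,
      ← Polynomial.coeff_zero_eq_eval_zero]
  rw [hzero]
  exact (hcont.tendsto (0, 0)).comp (hx.prodMk_nhds hy)

variable {κ : Type*}

/-- Along `l`, the points `(x, y)` approach the origin with `x > 0` and avoid the zeros of all the
`G i`, and `G q` is negligible compared with `G p`, which is itself not smaller than `x ^ N`. -/
structure Approach (l : Filter ι) (x y : ι → ℝ) (N : ℕ) (G : κ → ℝ[X][Y]) (p q : κ) : Prop where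
  tendsto_x : Tendsto x l (𝓝[>] 0)
  tendsto_y : Tendsto y l (𝓝 0)
  eventually_ne_zero (i : κ) : ∀ᶠ n in l, (G i).evalEval (x n) (y n) ≠ 0
  isLittleO : (fun n => (G q).evalEval (x n) (y n)) =o[l] fun n => (G p).evalEval (x n) (y n)
  pow_isBigO : (fun n => x n ^ N) =O[l] fun n => (G p).evalEval (x n) (y n)

theorem evalEval_substHom_root (hm : 0 < m) (k : ℕ) (t : ℝ) {x : ℝ} (hx : 0 < x) (y : ℝ) :
    (substHom m k t Q).evalEval (x ^ (m : ℝ)⁻¹) (y / (x ^ (m : ℝ)⁻¹) ^ k - t) = Q.evalEval x y := by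
  rw [evalEval_substHom, Real.rpow_inv_natCast_pow hx.le hm.ne', add_sub_cancel,
    mul_div_cancel₀ _ (by positivity)]

theorem Approach.comp_substHom {N : ℕ} {G : κ → ℝ[X][Y]} {p q : κ} {t : ℝ}
    (h : Approach l x y N G p q) (hm : 0 < m)
    (ht : Tendsto (fun n => y n / (x n ^ (m : ℝ)⁻¹) ^ k) l (𝓝 t)) :
    Approach l (fun n => x n ^ (m : ℝ)⁻¹) (fun n => y n / (x n ^ (m : ℝ)⁻¹) ^ k - t) (m * N)
      (fun i => substHom m k t (G i)) p q := by
  have heval (i : κ) : (fun n => (G i).evalEval (x n) (y n)) =ᶠ[l] fun n =>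
      (substHom m k t (G i)).evalEval (x n ^ (m : ℝ)⁻¹) (y n / (x n ^ (m : ℝ)⁻¹) ^ k - t) :=
    (h.tendsto_x.eventually self_mem_nhdsWithin).mono fun n hn =>
      (evalEval_substHom_root hm k t hn (y n)).symm
  have hpow : (fun n => x n ^ N) =ᶠ[l] fun n => (x n ^ (m : ℝ)⁻¹) ^ (m * N) :=
    (eventually_root_pow_eq hm h.tendsto_x).mono fun n hn => by simp only [pow_mul, hn]
  exact
    { tendsto_x := (tendsto_rpow_nhdsGT_zero (by positivity)).comp h.tendsto_x
      tendsto_y := by simpa using ht.sub_const t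
      eventually_ne_zero i :=
        (h.eventually_ne_zero i).congr ((heval i).mono fun n hn => (Eq.congr_left hn).not)
      isLittleO := h.isLittleO.congr' (heval q) (heval p)
      pow_isBigO := h.pow_isBigO.congr' hpow (heval p) }

end Approach

section Recursion

open Asymptotics

variable {ι κ : Type*} {m k N : ℕ} {a : κ → ℕ} {P : κ → ℝ[X][Y]} {p q : κ} {x y : ι → ℝ}

theorem HasCurve.of_exponent (hP : ∀ i, restrictZero (P i) ≠ 0) (hm : 0 < m)
    (hL : ∀ i, AboveLine m k (P i)) {σ : ℚ} (hσ : 0 < σ) (hσk : (σ : ℝ) < k / m)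
    (hlt : a p + σ * yOrder (P p) < a q + σ * yOrder (P q)) :
    HasCurve (Set.Ioi 0) (fun i => Polynomial.C (Polynomial.X ^ a i) * P i) p q := by
  have hσ' : (0 : ℝ) < σ := Rat.cast_pos.2 hσ
  have hroot : (fun s : ℝ => (s ^ (m : ℝ)⁻¹) ^ k) =o[𝓝[>] 0] fun s => s ^ (σ : ℝ) := by
    refine (isLittleO_rpow_nhdsGT_zero hσk).congr' ?_ EventuallyEq.rfl
    filter_upwards [self_mem_nhdsWithin] with s (hs : 0 < s)
    rw [← Real.rpow_natCast, ← Real.rpow_mul hs.le, div_eq_inv_mul]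
  have htheta (i : κ) : (fun s => (Polynomial.C (Polynomial.X ^ a i) * P i).evalEval s
      (puiseuxEval (Finsupp.single σ 1) s)) =Θ[𝓝[>] 0]
        fun s => s ^ (a i + σ * yOrder (P i) : ℝ) := by
    simp only [puiseuxEval_single, one_mul]
    refine ((hL i).isTheta_evalEval_C_X_pow_mul hm (hP i) (a i) tendsto_id
      ((tendsto_rpow_nhdsGT_zero hσ').mono_right nhdsWithin_le_nhds) hroot).trans_eventuallyEq ?_
    filter_upwards [self_mem_nhdsWithin] with s (hs : 0 < s)
    rw [id, Real.rpow_add hs, Real.rpow_mul hs.le, Real.rpow_natCast, Real.rpow_natCast]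
  refine ⟨Finsupp.single σ 1, fun e he => ?_, fun i => ?_, ?_⟩
  · rwa [Finset.mem_singleton.1 (Finsupp.support_single_subset he)]
  · filter_upwards [(htheta i).eq_zero_iff, self_mem_nhdsWithin] with s hs (hpos : 0 < s)
    exact hs.not.2 (Real.rpow_pos_of_pos hpos _).ne'
  · refine (htheta q).trans_isLittleO
      ((isLittleO_rpow_nhdsGT_zero ?_).trans_isTheta (htheta p).symm)
    exact_mod_cast hlt

theorem isBigO_evalEval_C_X_pow_mul {l : Filter ι} (Q : ℝ[X][Y]) (a : ℕ) (hx : Tendsto x l (𝓝 0))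
    (hy : Tendsto y l (𝓝 0)) :
    (fun n => (Polynomial.C (Polynomial.X ^ a) * Q).evalEval (x n) (y n)) =O[l]
      fun n => x n ^ a := by
  simpa [Polynomial.evalEval_C] using
    (isBigO_refl (fun n => x n ^ a) l).mul ((tendsto_evalEval_zero Q hx hy).isBigO_one ℝ)

theorem pow_isBigO_evalEval_C_X_pow_mul {l : Filter ι} {Q : ℝ[X][Y]} (hQ : (Q.coeff 0).coeff 0 ≠ 0)
    (a : ℕ) (hx : Tendsto x l (𝓝 0)) (hy : Tendsto y l (𝓝 0)) :
    (fun n => x n ^ a) =O[l]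
      fun n => (Polynomial.C (Polynomial.X ^ a) * Q).evalEval (x n) (y n) := by
  have hQ1 : (fun _ => (1 : ℝ)) =O[l] fun n => Q.evalEval (x n) (y n) :=
    (((isEquivalent_const_iff_tendsto hQ).2 (tendsto_evalEval_zero Q hx hy)).isTheta.trans
      (isTheta_const_const hQ one_ne_zero)).isBigO_symm
  simpa [Polynomial.evalEval_C] using (isBigO_refl (fun n => x n ^ a) l).mul hQ1

theorem eventually_pow_ne_zero {l : Filter ι} (hx : Tendsto x l (𝓝[>] 0)) (a : ℕ) :
    ∀ᶠ n in l, x n ^ a ≠ 0 :=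
  (hx.eventually self_mem_nhdsWithin).mono fun _ hn => (pow_pos hn a).ne'

theorem le_of_pow_isBigO_pow {l : Filter ι} [l.NeBot] (hx : Tendsto x l (𝓝[>] 0)) {a b : ℕ}
    (h : (fun n => x n ^ a) =O[l] fun n => x n ^ b) : b ≤ a := by
  by_contra! hab
  exact isLittleO_irrefl (eventually_pow_ne_zero hx a).frequently (h.trans_isLittleO
    ((isLittleO_pow_pow hab).comp_tendsto (hx.mono_right nhdsWithin_le_nhds)))

theorem lt_of_pow_isLittleO_pow {l : Filter ι} [l.NeBot] (hx : Tendsto x l (𝓝[>] 0)) {a b : ℕ}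
    (h : (fun n => x n ^ a) =o[l] fun n => x n ^ b) : b < a := by
  refine (le_of_pow_isBigO_pow hx h.isBigO).lt_of_ne ?_
  rintro rfl
  exact isLittleO_irrefl (eventually_pow_ne_zero hx b).frequently h

namespace Approach

theorem le_exponent {l : Filter ι} [l.NeBot]
    (h : Approach l x y N (fun i => Polynomial.C (Polynomial.X ^ a i) * P i) p q) : a p ≤ N :=
  le_of_pow_isBigO_pow h.tendsto_x (h.pow_isBigO.trans (isBigO_evalEval_C_X_pow_mul _ _
    (h.tendsto_x.mono_right nhdsWithin_le_nhds) h.tendsto_y))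

theorem lt_of_yOrder_eq_zero {l : Filter ι} [l.NeBot] (hPq : restrictZero (P q) ≠ 0)
    (h : Approach l x y N (fun i => Polynomial.C (Polynomial.X ^ a i) * P i) p q)
    (hq : yOrder (P q) = 0) : a p < a q := by
  have hx := h.tendsto_x.mono_right nhdsWithin_le_nhds
  have hcoeff : ((P q).coeff 0).coeff 0 ≠ 0 := by
    simpa only [hq] using coeff_zero_coeff_yOrder_ne_zero hPq
  exact lt_of_pow_isLittleO_pow h.tendsto_x <|
    ((pow_isBigO_evalEval_C_X_pow_mul hcoeff (a q) hx h.tendsto_y).trans_isLittleO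
      h.isLittleO).trans_isBigO (isBigO_evalEval_C_X_pow_mul (P p) (a p) hx h.tendsto_y)

/-- If `y` dominates `x ^ (k / m)`, every `G i` behaves like a monomial, and the exponent of a
single point close enough to the origin already gives the required curve. -/
theorem hasCurve_of_isLittleO {l : Filter ι} [l.NeBot] (hP : ∀ i, restrictZero (P i) ≠ 0)
    (hm : 0 < m) (hL : ∀ i, AboveLine m k (P i))
    (h : Approach l x y N (fun i => Polynomial.C (Polynomial.X ^ a i) * P i) p q)
    (hxy : (fun n => (x n ^ (m : ℝ)⁻¹) ^ k) =o[l] y) :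
    HasCurve (Set.Ioi 0) (fun i => Polynomial.C (Polynomial.X ^ a i) * P i) p q := by
  have htheta (i : κ) :=
    (hL i).isTheta_evalEval_C_X_pow_mul hm (hP i) (a i) h.tendsto_x h.tendsto_y hxy
  have hmon : (fun n => x n ^ a q * y n ^ yOrder (P q)) =o[l]
      fun n => x n ^ a p * y n ^ yOrder (P p) :=
    ((htheta q).symm.trans_isLittleO h.isLittleO).trans_isTheta (htheta p)
  have hx1 : ∀ᶠ n in l, x n < 1 :=
    (h.tendsto_x.mono_right nhdsWithin_le_nhds).eventually_lt_const one_pos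
  have hy1 : ∀ᶠ n in l, |y n| < 1 := by
    simpa using h.tendsto_y.abs.eventually_lt_const (by simp)
  obtain ⟨n, hx0, hx1, hy1, hroot, hlt⟩ := ((h.tendsto_x.eventually self_mem_nhdsWithin).and <|
    hx1.and <| hy1.and <| (hxy.bound one_half_pos).and (hmon.bound one_half_pos)).exists
  replace hx0 : 0 < x n := hx0
  have hpow : (x n ^ (m : ℝ)⁻¹) ^ k = x n ^ (k / m : ℝ) := by
    rw [← Real.rpow_natCast, ← Real.rpow_mul hx0.le, div_eq_inv_mul]
  have hpos : 0 < x n ^ (k / m : ℝ) := Real.rpow_pos_of_pos hx0 _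
  simp only [norm_mul, norm_pow, Real.norm_eq_abs, hpow, abs_of_pos hx0, abs_of_pos hpos]
    at hroot hlt
  have hy0 : 0 < |y n| := by linarith
  have hmon0 : 0 < x n ^ a p * |y n| ^ yOrder (P p) := by positivity
  obtain ⟨σ, hσ, hσk, hσlt⟩ := exists_rat_exponent hx0 hx1 hy1 (ρ := k / m) (by linarith)
    (hlt.trans_lt (mul_lt_of_lt_one_left hmon0 one_half_lt_one))
  exact HasCurve.of_exponent hP hm hL hσ hσk hσlt

theorem hasCurve_or_exists_tendsto {U : Ultrafilter ι} (hP : ∀ i, restrictZero (P i) ≠ 0)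
    (hm : 0 < m) (hk : 0 < k) (hL : ∀ i, AboveLine m k (P i))
    (h : Approach U x y N (fun i => Polynomial.C (Polynomial.X ^ a i) * P i) p q) :
    HasCurve (Set.Ioi 0) (fun i => Polynomial.C (Polynomial.X ^ a i) * P i) p q ∨
      (∃ t, Tendsto (fun n => y n / (x n ^ (m : ℝ)⁻¹) ^ k) U (𝓝 t)) ∧
        min (a p) (a q) < min (a p + yOrder (P p)) (a q + yOrder (P q)) := by
  rcases exists_tendsto_nhds_or_tendsto_abs_atTop U fun n => y n / (x n ^ (m : ℝ)⁻¹) ^ k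
    with ht | htop
  swap
  · exact Or.inl (h.hasCurve_of_isLittleO hP hm hL (tendsto_abs_div_atTop_iff.1 htop).2)
  by_cases hσ : a p + (k / m / 2 : ℚ) * yOrder (P p) < a q + (k / m / 2 : ℚ) * yOrder (P q)
  · refine Or.inl (HasCurve.of_exponent hP hm hL (by positivity) ?_ hσ)
    push_cast
    exact half_lt_self (by positivity)
  refine Or.inr ⟨ht, ?_⟩
  have hq := h.lt_of_yOrder_eq_zero (hP q)
  have hp : yOrder (P p) = 0 → a q ≤ a p ∧ (a p ≤ a q → yOrder (P q) = 0) := fun hp => by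
    have hpos : (0 : ℚ) < k / m / 2 := by positivity
    rw [hp, Nat.cast_zero, mul_zero, add_zero, not_lt] at hσ
    refine ⟨by exact_mod_cast (le_add_of_nonneg_right (by positivity)).trans hσ, fun hle => ?_⟩
    have hle' : (a p : ℚ) ≤ a q := by exact_mod_cast hle
    by_contra hne
    have : 0 < (k / m / 2 : ℚ) * yOrder (P q) := by positivity
    linarith
  omega

end Approach

theorem exists_substHom_C_X_pow_mul_eq (hP : ∀ i, restrictZero (P i) ≠ 0) (hm : 0 < m)
    (hk : 0 < k) (hL : ∀ i, AboveLine m k (P i)) (a : κ → ℕ) (t : ℝ) :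
    ∃ P' : κ → ℝ[X][Y], (∀ i, restrictZero (P' i) ≠ 0) ∧
      (∀ i, substHom m k t (Polynomial.C (Polynomial.X ^ a i) * P i) =
        Polynomial.C (Polynomial.X ^ (m * a i + k * yOrder (P i))) * P' i) ∧
      ∀ i, yOrder (P' i) = (edgePoly m k (P i)).rootMultiplicity t := by
  choose P' hsub hres using fun i => (hL i).exists_substHom_eq hk t
  refine ⟨P', fun i => ?_, fun i => ?_, fun i => yOrder_eq_rootMultiplicity (hres i)⟩
  · rw [hres, Polynomial.comp_X_add_C_ne_zero_iff]
    exact edgePoly_ne_zero hm k (hP i)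
  · have hX : substHom m k t (Polynomial.C (Polynomial.X ^ a i)) =
        Polynomial.C (Polynomial.X ^ (m * a i)) := by
      rw [substHom, Polynomial.coe_eval₂RingHom, Polynomial.eval₂_C]
      simp [pow_mul]
    rw [map_mul, hX, hsub, ← mul_assoc, ← Polynomial.C_mul, ← pow_add]

theorem exists_aboveLine_rootMultiplicity_lt [Finite κ] (hP : ∀ i, restrictZero (P i) ≠ 0) :
    ∃ m k, 0 < m ∧ 0 < k ∧ (∀ i, AboveLine m k (P i)) ∧
      (m = 1 ∧ k = 1 ∨ ∃ i, ∀ t, (edgePoly m k (P i)).rootMultiplicity t < yOrder (P i)) := by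
  rcases exists_aboveLine P with hL | ⟨m, k, hk, hkm, hL, i, j, hj, hE⟩
  · exact ⟨1, 1, one_pos, one_pos, hL, Or.inl ⟨rfl, rfl⟩⟩
  · exact ⟨m, k, hk.trans hkm, hk, hL,
      Or.inr ⟨i, rootMultiplicity_edgePoly_lt hk hkm (hP i) hj hE⟩⟩

theorem Approach.hasCurve [Finite κ] {U : Ultrafilter ι} {x y : ι → ℝ} {N : ℕ} {a : κ → ℕ}
    {P : κ → ℝ[X][Y]} (hP : ∀ i, restrictZero (P i) ≠ 0)
    (h : Approach U x y N (fun i => Polynomial.C (Polynomial.X ^ a i) * P i) p q) :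
    HasCurve (Set.Ioi 0) (fun i => Polynomial.C (Polynomial.X ^ a i) * P i) p q := by
  cases nonempty_fintype κ
  induction hμ : toLex (∑ i, yOrder (P i), N + 1 - min (a p) (a q)) using WellFoundedLT.induction
    generalizing x y N a P with
  | ind μ ih =>
  subst hμ
  obtain ⟨m, k, hm, hk, hL, hstep⟩ := exists_aboveLine_rootMultiplicity_lt hP
  rcases h.hasCurve_or_exists_tendsto hP hm hk hL with hdone | ⟨⟨t, ht⟩, hmin⟩
  · exact hdone
  obtain ⟨P', hP', hsub, hord⟩ := exists_substHom_C_X_pow_mul_eq hP hm hk hL a t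
  have h' := h.comp_substHom hm ht
  simp only [hsub] at h'
  have hle (i : κ) : yOrder (P' i) ≤ yOrder (P i) :=
    (hord i).trans_le (rootMultiplicity_edgePoly_le hm k (hP i) t)
  have hdecr : toLex (∑ i, yOrder (P' i),
        m * N + 1 - min (m * a p + k * yOrder (P p)) (m * a q + k * yOrder (P q))) <
      toLex (∑ i, yOrder (P i), N + 1 - min (a p) (a q)) := by
    rw [Prod.Lex.toLex_lt_toLex]
    rcases hstep with ⟨rfl, rfl⟩ | ⟨i, hi⟩
    · have hN := h.le_exponent
      have hsum := Finset.sum_le_sum fun i (_ : i ∈ Finset.univ) => hle i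
      omega
    · exact Or.inl (Finset.sum_lt_sum (fun i _ => hle i)
        ⟨i, Finset.mem_univ i, (hord i).trans_lt (hi t)⟩)
  have hcurve := ih _ hdecr hP' h' rfl
  simp only [← hsub] at hcurve
  exact (hcurve.of_substHom hm).mono fun e he => (show (0 : ℚ) < k / m by positivity).trans_le he

end Recursion

section Sector

open Asymptotics

variable {ι : Type*} {U : Ultrafilter ι} {x y : ι → ℝ}

theorem Approach.hasCurve_of_div_tendsto {κ : Type*} [Finite κ] {N : ℕ} {G : κ → ℝ[X][Y]}
    {p q : κ} {t : ℝ} (h : Approach U x y N G p q)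
    (ht : Tendsto (fun n => y n / x n) U (𝓝 t)) : HasCurve (Set.Ici 1) G p q := by
  have h' := h.comp_substHom (m := 1) (k := 1) one_pos (t := t) (by simpa using ht)
  have hne (i : κ) : substHom 1 1 t (G i) ≠ 0 := fun h0 => by
    obtain ⟨n, hn⟩ := (h'.eventually_ne_zero i).exists
    exact hn (by rw [h0, Polynomial.evalEval_zero])
  choose a P hP hG using fun i => exists_eq_C_X_pow_mul (hne i)
  simp only [hG] at h'
  have hcurve := h'.hasCurve hP
  simp only [← hG] at hcurve
  simpa using hcurve.of_substHom one_pos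

theorem exists_pow_isBigO_evalEval_of_isRelPrime {l : Filter ι} {f g : ℝ[X][Y]}
    (h : IsRelPrime f g) (hx : Tendsto x l (𝓝 0)) (hy : Tendsto y l (𝓝 0))
    (ho : (fun n => g.evalEval (x n) (y n)) =o[l] fun n => f.evalEval (x n) (y n)) :
    ∃ N : ℕ, (fun n => x n ^ N) =O[l] fun n => f.evalEval (x n) (y n) := by
  obtain ⟨r, A, B, hr, hAB⟩ := exists_mul_add_mul_eq_C_of_isRelPrime h
  obtain ⟨N, hN⟩ := exists_pow_isBigO_eval hr hx
  have hA := (isBigO_refl (fun n => f.evalEval (x n) (y n)) l).mul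
    ((tendsto_evalEval_zero A hx hy).isBigO_one ℝ)
  have hB := ho.isBigO.mul ((tendsto_evalEval_zero B hx hy).isBigO_one ℝ)
  refine ⟨N, hN.trans ((hA.add hB).congr (fun n => ?_) fun n => mul_one _)⟩
  rw [← Polynomial.evalEval_mul, ← Polynomial.evalEval_mul, ← Polynomial.evalEval_add, hAB,
    Polynomial.evalEval_C]

theorem exists_tendsto_div_of_abs_le (hx : Tendsto x U (𝓝[>] 0))
    (hxy : ∀ᶠ n in U, |y n| ≤ x n) : ∃ t, Tendsto (fun n => y n / x n) U (𝓝 t) := by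
  refine (exists_tendsto_nhds_or_tendsto_abs_atTop U _).resolve_right fun htop => ?_
  obtain ⟨n, hn, hlt, hpos⟩ := (hxy.and ((htop.eventually_gt_atTop 1).and
    (hx.eventually self_mem_nhdsWithin))).exists
  replace hpos : 0 < x n := hpos
  rw [abs_div, abs_of_pos hpos, one_lt_div hpos] at hlt
  exact hn.not_gt hlt

theorem exists_puiseuxEval_tendsto_abs_div_atTop {f g : ℝ[X][Y]} (hx : Tendsto x U (𝓝[>] 0))
    (hxy : ∀ᶠ n in U, |y n| ≤ x n)
    (h : Tendsto (fun n => |f.evalEval (x n) (y n) / g.evalEval (x n) (y n)|) U atTop) :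
    ∃ F : ℚ →₀ ℝ, (∀ e ∈ F.support, 1 ≤ e) ∧
      Tendsto (fun s => |f.evalEval s (puiseuxEval F s) / g.evalEval s (puiseuxEval F s)|)
        (𝓝[>] 0) atTop := by
  have hx0 : Tendsto x U (𝓝 0) := hx.mono_right nhdsWithin_le_nhds
  have hy0 : Tendsto y U (𝓝 0) := squeeze_zero_norm' hxy hx0
  have hg := (tendsto_abs_div_atTop_iff.1 h).1
  have hgne : g ≠ 0 := by
    rintro rfl
    obtain ⟨n, hn⟩ := hg.exists
    exact hn (Polynomial.evalEval_zero _ _)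
  obtain ⟨f, g, d, hfg, rfl, rfl⟩ :=
    UniqueFactorizationMonoid.exists_reduced_factors' f g hgne
  simp only [Polynomial.evalEval_mul] at h hg ⊢
  obtain ⟨hd, hg⟩ := eventually_and.1 (hg.mono fun n => mul_ne_zero_iff.1)
  obtain ⟨-, ho⟩ := tendsto_abs_div_atTop_iff.1 <|
    h.congr' (hd.mono fun n hn => by rw [mul_div_mul_left _ _ hn])
  obtain ⟨N, hN⟩ := exists_pow_isBigO_evalEval_of_isRelPrime hfg hx0 hy0 ho
  have hf : ∀ᶠ n in U, f.evalEval (x n) (y n) ≠ 0 :=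
    (ho.isBigO.eq_zero_imp.and hg).mono fun n hn => mt hn.1 hn.2
  have happ : Approach U x y N ![f, g, d] 0 1 :=
    ⟨hx, hy0, Fin.cons hf (Fin.cons hg (Fin.cons hd finZeroElim)), ho, hN⟩
  obtain ⟨t, ht⟩ := exists_tendsto_div_of_abs_le hx hxy
  obtain ⟨F, hF, hne, hlim⟩ := happ.hasCurve_of_div_tendsto ht
  refine ⟨F, hF, (tendsto_abs_div_atTop_iff.2 ⟨hne 1, hlim⟩).congr' ?_⟩
  filter_upwards [hne 2] with s hs
  exact congrArg abs (mul_div_mul_left _ _ hs).symm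

end Sector

section Charts

theorem typeI_puiseuxEval_abs {F : ℚ →₀ ℝ} (hF : ∀ e ∈ F.support, 1 ≤ e) :
    TypeI fun t => puiseuxEval F |t| := by
  let e := F.support.orderEmbOfFin rfl
  have hmem (k) : e k ∈ F.support := F.support.orderEmbOfFin_mem rfl k
  refine ⟨F.support.card, fun k => F (e k), e, fun k => Finsupp.mem_support_iff.1 (hmem k),
    e.strictMono, fun k => hF _ (hmem k), fun t => ?_⟩
  simp only [puiseuxEval, Finsupp.sum]
  rw [← Finset.sum_coe_sort, ← (F.support.orderIsoOfFin rfl).toEquiv.sum_comp]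
  simp only [RelIso.coe_fn_toEquiv, Finset.coe_orderIsoOfFin_apply, e]

theorem TypeI.map_neg {Φ : ℝ → ℝ} (hΦ : TypeI Φ) (t : ℝ) : Φ (-t) = Φ t := by
  obtain ⟨N, φ, e, -, -, -, h⟩ := hΦ
  rw [h, h, abs_neg]

theorem evalEval_aeval (a b : ℝ[X][Y]) (p : MvPolynomial (Fin 2) ℝ) (x y : ℝ) :
    (aeval ![a, b] p).evalEval x y = pev p (a.evalEval x y, b.evalEval x y) := by
  induction p using MvPolynomial.induction_on with
  | C r => simp [pev, Polynomial.algebraMap_apply, Polynomial.evalEval_C]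
  | add p q hp hq =>
    simp only [pev, map_add, Polynomial.evalEval_add] at *
    rw [hp, hq]
  | mul_X p i hp =>
    simp only [pev, map_mul, Polynomial.evalEval_mul] at *
    rw [hp]
    fin_cases i <;> simp

variable {p q : MvPolynomial (Fin 2) ℝ} {x₀ y₀ : ℝ}

theorem exists_typeI_tendsto_of_chart {U : Ultrafilter (ℝ × ℝ)} {a b : ℝ[X][Y]} {x y : ℝ × ℝ → ℝ}
    (h : Tendsto (fun v => |pev p v / pev q v|) U atTop)
    (hchart : ∀ v, (a.evalEval (x v) (y v), b.evalEval (x v) (y v)) = v)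
    (hx : Tendsto x U (𝓝 0)) (hxy : ∀ᶠ v in U, 0 < x v ∧ |y v| ≤ x v) :
    ∃ Φ, TypeI Φ ∧ Tendsto (fun s => |pev p (a.evalEval s (Φ s), b.evalEval s (Φ s)) /
      pev q (a.evalEval s (Φ s), b.evalEval s (Φ s))|) (𝓝[>] 0) atTop := by
  obtain ⟨F, hF, hlim⟩ := exists_puiseuxEval_tendsto_abs_div_atTop (x := x) (y := y)
    (f := aeval ![a, b] p) (g := aeval ![a, b] q)
    (tendsto_nhdsWithin_iff.2 ⟨hx, hxy.mono fun v => And.left⟩) (hxy.mono fun v => And.right)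
    (by simpa only [evalEval_aeval, hchart] using h)
  refine ⟨_, typeI_puiseuxEval_abs hF, hlim.congr' ?_⟩
  filter_upwards [self_mem_nhdsWithin] with s (hs : 0 < s)
  rw [evalEval_aeval, evalEval_aeval, abs_of_pos hs]

theorem exists_ultrafilter_tendsto_abs_div_atTop
    (hub : ∀ U ∈ 𝓝 (x₀, y₀), ∀ M : ℝ, ∃ v ∈ U, pev q v ≠ 0 ∧ M < |pev p v / pev q v|) :
    ∃ U : Ultrafilter (ℝ × ℝ), ↑U ≤ 𝓝 (x₀, y₀) ∧
      Tendsto (fun v => |pev p v / pev q v|) U atTop := by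
  have hne : (𝓝 (x₀, y₀) ⊓ comap (fun v => |pev p v / pev q v|) atTop).NeBot := by
    rw [((𝓝 (x₀, y₀)).basis_sets.inf (atTop_basis.comap _)).neBot_iff]
    rintro ⟨s, M⟩ ⟨hs, -⟩
    obtain ⟨v, hv, -, hM⟩ := hub s hs M
    exact ⟨v, hv, hM.le⟩
  exact ⟨Ultrafilter.of _, (Ultrafilter.of_le _).trans inf_le_left,
    tendsto_iff_comap.2 ((Ultrafilter.of_le _).trans inf_le_right)⟩

theorem abs_le_sector_cases {d e : ℝ} (h : ¬(d = 0 ∧ e = 0)) :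
    ((0 < d ∧ |e| ≤ d) ∨ (0 < -d ∧ |e| ≤ -d)) ∨ ((0 < e ∧ |d| ≤ e) ∨ (0 < -e ∧ |d| ≤ -e)) := by
  grind

theorem tendsto_sub_nhdsGT (c : ℝ) : Tendsto (fun x => x - c) (𝓝[>] c) (𝓝[>] 0) :=
  tendsto_nhdsWithin_iff.2
    ⟨((continuous_sub_right c).tendsto' _ _ (sub_self c)).mono_left nhdsWithin_le_nhds,
      eventually_mem_nhdsWithin.mono fun x (hx : c < x) => sub_pos.2 hx⟩

theorem tendsto_sub_nhdsLT (c : ℝ) : Tendsto (fun x => c - x) (𝓝[<] c) (𝓝[>] 0) :=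
  tendsto_nhdsWithin_iff.2
    ⟨((continuous_sub_left c).tendsto' _ _ (sub_self c)).mono_left nhdsWithin_le_nhds,
      eventually_mem_nhdsWithin.mono fun x (hx : x < c) => sub_pos.2 hx⟩

variable {U : Ultrafilter (ℝ × ℝ)}

theorem exists_typeI_tendsto_fst (hlim : Tendsto (fun v => |pev p v / pev q v|) U atTop)
    (hx : Tendsto (fun v : ℝ × ℝ => v.1 - x₀) U (𝓝 0))
    (hsector : ∀ᶠ v : ℝ × ℝ in U, (0 < v.1 - x₀ ∧ |v.2 - y₀| ≤ v.1 - x₀) ∨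
      (0 < -(v.1 - x₀) ∧ |v.2 - y₀| ≤ -(v.1 - x₀))) :
    ∃ Φ, TypeI Φ ∧
      (Tendsto (fun x => |pev p (x, y₀ + Φ (x - x₀)) / pev q (x, y₀ + Φ (x - x₀))|)
          (𝓝[>] x₀) atTop ∨
       Tendsto (fun x => |pev p (x, y₀ + Φ (x - x₀)) / pev q (x, y₀ + Φ (x - x₀))|)
          (𝓝[<] x₀) atTop) := by
  rcases Ultrafilter.eventually_or.1 hsector with hv | hv
  · obtain ⟨Φ, hΦ, h⟩ := exists_typeI_tendsto_of_chart hlim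
      (a := Polynomial.C (Polynomial.C x₀ + Polynomial.X))
      (b := Polynomial.C (Polynomial.C y₀) + Polynomial.X)
      (fun v => by simp [Polynomial.evalEval_C]) hx hv
    refine ⟨Φ, hΦ, Or.inl ?_⟩
    simpa [Function.comp_def, Polynomial.evalEval_C] using h.comp (tendsto_sub_nhdsGT x₀)
  · obtain ⟨Φ, hΦ, h⟩ := exists_typeI_tendsto_of_chart hlim
      (a := Polynomial.C (Polynomial.C x₀ - Polynomial.X))
      (b := Polynomial.C (Polynomial.C y₀) + Polynomial.X)
      (fun v => by simp [Polynomial.evalEval_C]) (neg_zero (G := ℝ) ▸ hx.neg) hv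
    refine ⟨Φ, hΦ, Or.inr ?_⟩
    simpa [Function.comp_def, Polynomial.evalEval_C, ← hΦ.map_neg (_ - x₀)] using
      h.comp (tendsto_sub_nhdsLT x₀)

theorem exists_typeI_tendsto_snd (hlim : Tendsto (fun v => |pev p v / pev q v|) U atTop)
    (hy : Tendsto (fun v : ℝ × ℝ => v.2 - y₀) U (𝓝 0))
    (hsector : ∀ᶠ v : ℝ × ℝ in U, (0 < v.2 - y₀ ∧ |v.1 - x₀| ≤ v.2 - y₀) ∨
      (0 < -(v.2 - y₀) ∧ |v.1 - x₀| ≤ -(v.2 - y₀))) :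
    ∃ Φ, TypeI Φ ∧
      (Tendsto (fun y => |pev p (x₀ + Φ (y - y₀), y) / pev q (x₀ + Φ (y - y₀), y)|)
          (𝓝[>] y₀) atTop ∨
       Tendsto (fun y => |pev p (x₀ + Φ (y - y₀), y) / pev q (x₀ + Φ (y - y₀), y)|)
          (𝓝[<] y₀) atTop) := by
  rcases Ultrafilter.eventually_or.1 hsector with hv | hv
  · obtain ⟨Φ, hΦ, h⟩ := exists_typeI_tendsto_of_chart hlim
      (a := Polynomial.C (Polynomial.C x₀) + Polynomial.X)
      (b := Polynomial.C (Polynomial.C y₀ + Polynomial.X))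
      (fun v => by simp [Polynomial.evalEval_C]) hy hv
    refine ⟨Φ, hΦ, Or.inl ?_⟩
    simpa [Function.comp_def, Polynomial.evalEval_C] using h.comp (tendsto_sub_nhdsGT y₀)
  · obtain ⟨Φ, hΦ, h⟩ := exists_typeI_tendsto_of_chart hlim
      (a := Polynomial.C (Polynomial.C x₀) + Polynomial.X)
      (b := Polynomial.C (Polynomial.C y₀ - Polynomial.X))
      (fun v => by simp [Polynomial.evalEval_C]) (neg_zero (G := ℝ) ▸ hy.neg) hv
    refine ⟨Φ, hΦ, Or.inr ?_⟩
    simpa [Function.comp_def, Polynomial.evalEval_C, ← hΦ.map_neg (_ - y₀)] using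
      h.comp (tendsto_sub_nhdsLT y₀)

/-- Since `x / 0 = 0`, divergence along a full one-sided neighbourhood includes the fact that `q`
has no zero on the curve near the point. -/
theorem unbounded_implies_infinite_on_typeI_curve_general (p q : MvPolynomial (Fin 2) ℝ)
    (x₀ y₀ : ℝ)
    (hub : ∀ U ∈ 𝓝 (x₀, y₀), ∀ M : ℝ, ∃ v ∈ U, pev q v ≠ 0 ∧ M < |pev p v / pev q v|) :
    ∃ Φ : ℝ → ℝ, TypeI Φ ∧
      (Tendsto (fun x => |pev p (x, y₀ + Φ (x - x₀)) / pev q (x, y₀ + Φ (x - x₀))|)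
          (𝓝[>] x₀) atTop ∨
       Tendsto (fun x => |pev p (x, y₀ + Φ (x - x₀)) / pev q (x, y₀ + Φ (x - x₀))|)
          (𝓝[<] x₀) atTop ∨
       Tendsto (fun y => |pev p (x₀ + Φ (y - y₀), y) / pev q (x₀ + Φ (y - y₀), y)|)
          (𝓝[>] y₀) atTop ∨
       Tendsto (fun y => |pev p (x₀ + Φ (y - y₀), y) / pev q (x₀ + Φ (y - y₀), y)|)
          (𝓝[<] y₀) atTop) := by
  obtain ⟨U, hU, hlim⟩ := exists_ultrafilter_tendsto_abs_div_atTop hub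
  have hne : ∀ᶠ v : ℝ × ℝ in U, ¬(v.1 - x₀ = 0 ∧ v.2 - y₀ = 0) := by
    filter_upwards [hlim.eventually_gt_atTop |pev p (x₀, y₀) / pev q (x₀, y₀)|] with v hv h0
    rw [show v = (x₀, y₀) from Prod.ext (sub_eq_zero.1 h0.1) (sub_eq_zero.1 h0.2)] at hv
    exact hv.false
  have hx : Tendsto (fun v : ℝ × ℝ => v.1 - x₀) U (𝓝 0) :=
    ((continuous_fst.sub continuous_const).tendsto' (x₀, y₀) _ (sub_self x₀)).mono_left hU
  have hy : Tendsto (fun v : ℝ × ℝ => v.2 - y₀) U (𝓝 0) :=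
    ((continuous_snd.sub continuous_const).tendsto' (x₀, y₀) _ (sub_self y₀)).mono_left hU
  rcases Ultrafilter.eventually_or.1 (hne.mono fun v => abs_le_sector_cases) with hv | hv
  · obtain ⟨Φ, hΦ, h⟩ := exists_typeI_tendsto_fst hlim hx hv
    exact ⟨Φ, hΦ, by tauto⟩
  · obtain ⟨Φ, hΦ, h⟩ := exists_typeI_tendsto_snd hlim hy hv
    exact ⟨Φ, hΦ, by tauto⟩

end Charts

/-- If a rational function is unbounded on every punctured neighborhood of `(x₀,y₀)`,
then it tends to infinity in absolute value along some one-sided type (i) curve. -/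
theorem unbounded_implies_infinite_on_typeI_curve (p q : MvPolynomial (Fin 2) ℝ)
    (hq : q ≠ 0) (hcop : ∀ d : MvPolynomial (Fin 2) ℝ, d ∣ p → d ∣ q → IsUnit d)
    (x₀ y₀ : ℝ)
    (hub : ∀ U ∈ nhds ((x₀, y₀) : ℝ × ℝ), ∀ M : ℝ,
      ∃ v ∈ U, pev q v ≠ 0 ∧ M < |pev p v / pev q v|) :
    ∃ Φ : ℝ → ℝ, TypeI Φ ∧
      (Tendsto (fun x => |pev p (x, y₀ + Φ (x - x₀)) / pev q (x, y₀ + Φ (x - x₀))|)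
          (𝓝[{x : ℝ | x₀ < x ∧ pev q (x, y₀ + Φ (x - x₀)) ≠ 0}] x₀) atTop ∨
       Tendsto (fun x => |pev p (x, y₀ + Φ (x - x₀)) / pev q (x, y₀ + Φ (x - x₀))|)
          (𝓝[{x : ℝ | x < x₀ ∧ pev q (x, y₀ + Φ (x - x₀)) ≠ 0}] x₀) atTop ∨
       Tendsto (fun y => |pev p (x₀ + Φ (y - y₀), y) / pev q (x₀ + Φ (y - y₀), y)|)
          (𝓝[{y : ℝ | y₀ < y ∧ pev q (x₀ + Φ (y - y₀), y) ≠ 0}] y₀) atTop ∨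
       Tendsto (fun y => |pev p (x₀ + Φ (y - y₀), y) / pev q (x₀ + Φ (y - y₀), y)|)
          (𝓝[{y : ℝ | y < y₀ ∧ pev q (x₀ + Φ (y - y₀), y) ≠ 0}] y₀) atTop) := by
  obtain ⟨Φ, hΦ, h⟩ := unbounded_implies_infinite_on_typeI_curve_general p q x₀ y₀ hub
  refine ⟨Φ, hΦ, h.imp ?_ (Or.imp ?_ (Or.imp ?_ ?_))⟩ <;>
    exact fun hlim => hlim.mono_left (nhdsWithin_mono _ fun _ => And.left)
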